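/- arXiv:1609.00283 — 4 statements merged into one kernel-verified Lean document; each statement's English description precedes it below -/
import Mathlib

section
/- Let the weighted digraph be weakly connected, let every edge weight be nonzero, and suppose some vertex has out-degree 0. Then the null space of the weighted edge Laplacian equals the null space of A*W: for every x ∈ ℝ^m, Le.mulVec x = 0 if and only if (A*W).mulVec x = 0. -/
open Matrix

/-!
The transposed incidence matrix sends a vertex function `y` to its differences
`y (tail e) - y (head e)` along the edges, so its kernel consists of the functions constant on weak
components. A function in the range of the out-incidence matrix vanishes at every vertex of
out-degree zero. If each weak component has such a vertex, the two subspaces meet only in `0`.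
-/

section WeightedDigraph

variable {V ι : Type*} (R : Type*)

/-- The step relation of the digraph with edge maps `tail` and `head`. Two vertices lie in the same
weak component when they are related by `Relation.EqvGen (EdgeStep tail head)`. -/
def EdgeStep (tail head : ι → V) (a b : V) : Prop :=
  ∃ e, tail e = a ∧ head e = b

/-- The out-incidence matrix of a digraph, whose entry at `(v, e)` is `1` when `v` is the tail
of `e`. -/
def outIncidenceMatrix [DecidableEq V] [Zero R] [One R] (tail : ι → V) : Matrix V ι R :=
  of fun v e ↦ if v = tail e then 1 else 0

/-- The signed incidence matrix of a digraph, `1` at the tail and `-1` at the head of each edge.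
It is encoded as a difference of out-incidence matrices, so that a self-loop gives a zero column. -/
def incidenceMatrix [DecidableEq V] [Ring R] (tail head : ι → V) : Matrix V ι R :=
  outIncidenceMatrix R tail - outIncidenceMatrix R head

/-- The weighted edge Laplacian `Eᵀ * A * W` of a digraph, where `E` is the incidence matrix, `A`
the out-incidence matrix and `W` the matrix of edge weights, which may be any square matrix. -/
def edgeLaplacian [Fintype V] [DecidableEq V] [Fintype ι] [Ring R] (tail head : ι → V)
    (W : Matrix ι ι R) : Matrix ι ι R :=
  (incidenceMatrix R tail head)ᵀ * outIncidenceMatrix R tail * W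

variable {R}

theorem eq_of_eqvGen_edgeStep {α : Type*} {tail head : ι → V} {y : V → α}
    (hy : ∀ e, y (tail e) = y (head e)) {u v : V}
    (huv : Relation.EqvGen (EdgeStep tail head) u v) : y u = y v :=
  Setoid.eqvGen_le (s := Setoid.ker y) (by rintro _ _ ⟨e, rfl, rfl⟩; exact hy e) huv

variable [DecidableEq V]

theorem outIncidenceMatrix_mulVec_apply_eq_zero [Fintype ι] [NonAssocSemiring R] {tail : ι → V}
    {v : V} (hv : ∀ e, tail e ≠ v) (z : ι → R) : (outIncidenceMatrix R tail *ᵥ z) v = 0 := by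
  simp [outIncidenceMatrix, mulVec, dotProduct, (hv _).symm]

theorem outIncidenceMatrix_transpose_mulVec [Fintype V] [NonAssocSemiring R] (tail : ι → V)
    (y : V → R) : (outIncidenceMatrix R tail)ᵀ *ᵥ y = y ∘ tail := by
  ext e
  simp [outIncidenceMatrix, mulVec, dotProduct]

theorem incidenceMatrix_apply_of_ne [Ring R] {tail head : ι → V} {e : ι} (he : tail e ≠ head e)
    (v : V) : incidenceMatrix R tail head v e =
      if v = tail e then 1 else if v = head e then -1 else 0 := by
  by_cases hv : v = tail e
  · simp [incidenceMatrix, outIncidenceMatrix, hv, he]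
  · by_cases hv' : v = head e <;> simp [incidenceMatrix, outIncidenceMatrix, hv, hv', he.symm]

variable [Fintype V] [Ring R] {tail head : ι → V}

theorem incidenceMatrix_transpose_mulVec (y : V → R) :
    (incidenceMatrix R tail head)ᵀ *ᵥ y = y ∘ tail - y ∘ head := by
  simp only [incidenceMatrix, transpose_sub, sub_mulVec, outIncidenceMatrix_transpose_mulVec]

theorem incidenceMatrix_transpose_mulVec_eq_zero_iff {y : V → R} :
    (incidenceMatrix R tail head)ᵀ *ᵥ y = 0 ↔ ∀ e, y (tail e) = y (head e) := by
  rw [incidenceMatrix_transpose_mulVec, sub_eq_zero, funext_iff]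
  rfl

theorem eq_zero_of_incidenceMatrix_transpose_mulVec_eq_zero {y : V → R}
    (hy : (incidenceMatrix R tail head)ᵀ *ᵥ y = 0)
    (hzero : ∀ v, ∃ u, Relation.EqvGen (EdgeStep tail head) v u ∧ y u = 0) : y = 0 := by
  ext v
  obtain ⟨u, hvu, hu⟩ := hzero v
  exact (eq_of_eqvGen_edgeStep (incidenceMatrix_transpose_mulVec_eq_zero_iff.mp hy) hvu).trans hu

theorem nullspace_edgeLaplacian_eq_of_exists_outdeg_zero_general [Fintype ι]
    (hzero : ∀ v, ∃ u, Relation.EqvGen (EdgeStep tail head) v u ∧ ∀ e, tail e ≠ u)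
    (W : Matrix ι ι R) (x : ι → R) :
    edgeLaplacian R tail head W *ᵥ x = 0 ↔ (outIncidenceMatrix R tail * W) *ᵥ x = 0 := by
  rw [edgeLaplacian, Matrix.mul_assoc, ← mulVec_mulVec]
  refine ⟨fun h ↦ eq_zero_of_incidenceMatrix_transpose_mulVec_eq_zero h fun v ↦ ?_,
    fun h ↦ by rw [h, mulVec_zero]⟩
  obtain ⟨u, hvu, hu⟩ := hzero v
  refine ⟨u, hvu, ?_⟩
  rw [← mulVec_mulVec, outIncidenceMatrix_mulVec_apply_eq_zero hu]

end WeightedDigraph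

/-- For a weakly connected weighted digraph with nonzero edge weights
in which some vertex has out-degree 0, the null space of the weighted edge Laplacian
`Le = Eᵀ * A * W` equals the null space of `A * W`. -/
theorem nullspace_edgeLaplacian_eq_of_exists_outdeg_zero
    (n m : ℕ) (hn : 2 ≤ n) (hm : 1 ≤ m)
    (tail head : Fin m → Fin n) (hth : ∀ e, tail e ≠ head e)
    (w : Fin m → ℝ) (hw : ∀ e, w e ≠ 0)
    (E : Matrix (Fin n) (Fin m) ℝ)
    (hE : ∀ v e, E v e = if v = tail e then 1 else if v = head e then -1 else 0)
    (A : Matrix (Fin n) (Fin m) ℝ)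
    (hA : ∀ v e, A v e = if v = tail e then 1 else 0)
    (W : Matrix (Fin m) (Fin m) ℝ) (hW : W = Matrix.diagonal w)
    (Le : Matrix (Fin m) (Fin m) ℝ) (hLe : Le = Eᵀ * A * W)
    (hconn : ∀ u v : Fin n,
      Relation.ReflTransGen
        (fun a b => (∃ e, tail e = a ∧ head e = b) ∨ (∃ e, tail e = b ∧ head e = a)) u v)
    (hzero : ∃ v : Fin n, ∀ e, tail e ≠ v) :
    ∀ x : Fin m → ℝ, Le.mulVec x = 0 ↔ (A * W).mulVec x = 0 := by
  obtain rfl : E = incidenceMatrix ℝ tail head := by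
    ext v e
    rw [hE, incidenceMatrix_apply_of_ne (hth e)]
  obtain rfl : A = outIncidenceMatrix ℝ tail := ext hA
  obtain ⟨u, hu⟩ := hzero
  have hweak (v : Fin n) : Relation.EqvGen (EdgeStep tail head) v u := by
    rw [← Relation.EqvGen.reflTransGen_symmGen]
    exact hconn v u
  rw [hLe]
  exact nullspace_edgeLaplacian_eq_of_exists_outdeg_zero_general (fun v ↦ ⟨u, hweak v, hu⟩) W
end

section
/- Suppose every edge weight is nonzero, and let r be the number of vertices of the weighted digraph whose out-degree is at least 1. Then the dimension of the null space of the weighted edge Laplacian is at least m − r: finrank of the kernel of the linear map x ↦ Le.mulVec x on ℝ^m is ≥ m − r. -/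
open Matrix

theorem rank_add_finrank_ker_mulVecLin {ι κ R : Type*} [Fintype κ] [CommRing R] [IsDomain R]
    (M : Matrix ι κ R) :
    M.rank + Module.finrank R (LinearMap.ker M.mulVecLin) = Fintype.card κ := by
  rw [Matrix.rank, ← M.mulVecLin.quotKerEquivRange.finrank_eq,
    Submodule.finrank_quotient_add_finrank, Module.finrank_fintype_fun_eq_card]

section OutIncidence

variable {V ε : Type*} [DecidableEq V]

/-- The number of edges leaving `v`, in the digraph with edge set `ε` in which the edge `e` leaves
the vertex `tail e`. -/
abbrev outDegree [Fintype ε] (tail : ε → V) (v : V) : ℕ :=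
  (Finset.univ.filter fun e => tail e = v).card

/-- The out-incidence matrix of a digraph, with rows indexed by vertices and columns by edges. The
digraph enters only through the map `tail` sending each edge to the vertex it leaves. -/
def outIncMatrix (R : Type*) [Zero R] [One R] (tail : ε → V) : Matrix V ε R :=
  Matrix.of fun v e => if v = tail e then 1 else 0

variable [Fintype ε]

theorem outDegree_tail_pos (tail : ε → V) (e : ε) : 0 < outDegree tail (tail e) :=
  Finset.card_pos.mpr ⟨e, by simp⟩

theorem row_outIncMatrix_eq_zero {R : Type*} [Zero R] [One R] {tail : ε → V} {v : V}
    (hv : outDegree tail v = 0) : (outIncMatrix R tail).row v = 0 := by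
  funext e
  have v_ne_tail : v ≠ tail e := by
    rintro rfl
    exact (outDegree_tail_pos tail e).ne' hv
  exact if_neg v_ne_tail

variable [Fintype V]

theorem rank_outIncMatrix_le (R : Type*) [CommSemiring R] [StrongRankCondition R] (tail : ε → V) :
    (outIncMatrix R tail).rank ≤ (Finset.univ.filter fun v => 1 ≤ outDegree tail v).card := by
  refine rank_le_card_of_support_subset _ _ (Function.support_subset_iff'.mpr fun v hv => ?_)
  exact row_outIncMatrix_eq_zero (by simpa using hv)

theorem edgeLaplacian_kernel_dim_ge_general {ι κ R : Type*} [Fintype κ] [CommRing R] [IsDomain R]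
    (tail : ε → V) (B : Matrix ι V R) (W : Matrix ε κ R) :
    Fintype.card κ - (Finset.univ.filter fun v => 1 ≤ outDegree tail v).card ≤
      Module.finrank R (LinearMap.ker (B * outIncMatrix R tail * W).mulVecLin) := by
  have rank_le := calc
    (B * outIncMatrix R tail * W).rank ≤ (B * outIncMatrix R tail).rank := rank_mul_le_left _ _
    _ ≤ (outIncMatrix R tail).rank := rank_mul_le_right _ _
    _ ≤ (Finset.univ.filter fun v => 1 ≤ outDegree tail v).card := rank_outIncMatrix_le R tail
  have rank_nullity := rank_add_finrank_ker_mulVecLin (B * outIncMatrix R tail * W)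
  lia

end OutIncidence

/-- If every edge weight is nonzero and `r` is the number of vertices
with out-degree at least 1, then the dimension of the null space of the weighted
edge Laplacian `Le = Eᵀ * A * W` is at least `m - r`. -/
theorem edgeLaplacian_kernel_dim_ge
    (n m : ℕ) (hn : 2 ≤ n) (hm : 1 ≤ m)
    (tail head : Fin m → Fin n) (hth : ∀ e, tail e ≠ head e)
    (w : Fin m → ℝ) (hw : ∀ e, w e ≠ 0)
    (E : Matrix (Fin n) (Fin m) ℝ)
    (hE : ∀ v e, E v e = if v = tail e then 1 else if v = head e then -1 else 0)
    (A : Matrix (Fin n) (Fin m) ℝ)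
    (hA : ∀ v e, A v e = if v = tail e then 1 else 0)
    (W : Matrix (Fin m) (Fin m) ℝ) (hW : W = Matrix.diagonal w)
    (Le : Matrix (Fin m) (Fin m) ℝ) (hLe : Le = Eᵀ * A * W)
    (r : ℕ)
    (hr : r = (Finset.univ.filter
      (fun v : Fin n => 1 ≤ (Finset.univ.filter (fun e => tail e = v)).card)).card) :
    m - r ≤ Module.finrank ℝ ↥(LinearMap.ker Le.mulVecLin) := by
  rw [hLe, hr, show A = outIncMatrix ℝ tail from Matrix.ext hA]
  simpa only [Fintype.card_fin] using edgeLaplacian_kernel_dim_ge_general tail Eᵀ W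
end

section
/- Suppose all edge weights are positive and the first n−1 edges form a rooted in-branching with root the vertex indexed n−1. Let Q be the n×n real matrix whose first n−1 rows are the rows of Eτᵀ and whose last row is the all-ones row vector 1ₙᵀ. Then Q is invertible, and Q * Lg * Q⁻¹ equals the n×n block matrix whose upper-left (n−1)×(n−1) block is Eτᵀ * A * W * Rᵀ, whose upper-right (n−1)×1 block is zero, whose lower-left 1×(n−1) block is 1ₙᵀ * A * W * Rᵀ, and whose lower-right 1×1 block is zero. (I.e., Lg is similar to this block lower-triangular matrix.) -/
open Matrix

/-!
Write `Eτ` and `E` for the incidence matrices of the tree and of the whole digraph. Along the tree,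
every `eᵤ - eᵣ` (`r` the root) is a signed sum of rows of `Eτᵀ`, and
`n • eᵣ = 1ₙ - ∑ᵤ (eᵤ - eᵣ)`, so the rows of `Q` span when `n` is invertible. Since `1ₙᵀ * Eτ = 0`,
the matrix `Q * Qᵀ` is block diagonal with first block the Gram matrix `Eτᵀ * Eτ`, which is
therefore invertible. Any `X` with `1ₙᵀ * X = 0` has the same image under `Q` as its projection
`Eτ * (Eτᵀ * Eτ)⁻¹ * Eτᵀ * X`, hence equals it; applied to the non-tree columns this says
`E = Eτ * R`. Finally, for any `B`, and in particular for `B = A * W`, one has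
`Q * (B * Eᵀ) = (Q * B * Rᵀ) * Eτᵀ`, where `Eτᵀ` is the top block of `Q`.
-/

section BlockRows

variable {K V ι o κ ε : Type*} [CommRing K] [Fintype V] [DecidableEq V]
  {T : Matrix V ι K} {M : Matrix ι V K} {U : Matrix o V K} {e : V ≃ ι ⊕ o}

lemma eq_of_isUnit_fromRows (hQ : IsUnit ((fromRows M U).submatrix e id)) {X Y : Matrix V κ K}
    (hM : M * X = M * Y) (hU : U * X = U * Y) : X = Y := by
  have hXY : (fromRows M U).submatrix e id * X = (fromRows M U).submatrix e id * Y := by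
    change (fromRows M U * X).submatrix e id = (fromRows M U * Y).submatrix e id
    rw [fromRows_mul, fromRows_mul, hM, hU]
  let := hQ.invertible
  exact Matrix.mul_right_injective_of_invertible _ hXY

variable [Fintype ι] [Finite o]

lemma isUnit_gram_of_isUnit_fromRows [DecidableEq ι] (hUT : U * T = 0)
    (hQ : IsUnit ((fromRows Tᵀ U).submatrix e id)) : IsUnit (Tᵀ * T) := by
  classical
  cases nonempty_fintype o
  have hTU : Tᵀ * Uᵀ = 0 := by rw [← transpose_mul, hUT, transpose_zero]
  have hQQ : (fromRows Tᵀ U).submatrix e id * ((fromRows Tᵀ U).submatrix e id)ᵀ =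
      (fromBlocks (Tᵀ * T) 0 0 (U * Uᵀ)).submatrix e e := by
    change (fromRows Tᵀ U * (fromRows Tᵀ U)ᵀ).submatrix e e = _
    rw [transpose_fromRows, transpose_transpose, fromRows_mul_fromCols, hTU, hUT]
  have hblocks : IsUnit (fromBlocks (Tᵀ * T) 0 0 (U * Uᵀ)) := by
    rw [← isUnit_submatrix_equiv e e, ← hQQ]
    exact hQ.mul ((isUnit_transpose _).mpr hQ)
  exact (isUnit_fromBlocks_zero₁₂.mp hblocks).1

lemma mul_gram_inv_mul_transpose_mul [DecidableEq ι] (hUT : U * T = 0)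
    (hQ : IsUnit ((fromRows Tᵀ U).submatrix e id)) {X : Matrix V κ K} (hUX : U * X = 0) :
    T * ((Tᵀ * T)⁻¹ * Tᵀ * X) = X := by
  have hG : IsUnit (Tᵀ * T).det :=
    (isUnit_iff_isUnit_det _).mp (isUnit_gram_of_isUnit_fromRows hUT hQ)
  apply eq_of_isUnit_fromRows hQ
  · rw [← Matrix.mul_assoc, Matrix.mul_assoc _ Tᵀ, mul_nonsing_inv_cancel_left _ _ hG]
  · rw [← Matrix.mul_assoc, hUT, Matrix.zero_mul, hUX]

lemma mul_fromCols_one_gram_inv [DecidableEq ι] (hUT : U * T = 0)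
    (hQ : IsUnit ((fromRows Tᵀ U).submatrix e id)) {C : Matrix V κ K} (hUC : U * C = 0) :
    T * fromCols 1 ((Tᵀ * T)⁻¹ * Tᵀ * C) = fromCols T C := by
  rw [mul_fromCols, Matrix.mul_one, mul_gram_inv_mul_transpose_mul hUT hQ hUC]

lemma fromRows_conj_eq_fromBlocks [Fintype ε] (hQ : IsUnit ((fromRows M U).submatrix e id))
    (B : Matrix V ε K) (S : Matrix ε ι K) :
    (fromRows M U).submatrix e id * (B * (S * M)) * ((fromRows M U).submatrix e id)⁻¹ =
      (fromBlocks (M * B * S) 0 (U * B * S) 0).submatrix e e := by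
  cases nonempty_fintype o
  have hintertwine : fromRows M U * (B * (S * M)) =
      fromBlocks (M * B * S) (0 : Matrix ι o K) (U * B * S) (0 : Matrix o o K) * fromRows M U := by
    rw [fromRows_mul, fromBlocks_mul_fromRows]
    simp only [Matrix.zero_mul, add_zero, Matrix.mul_assoc]
  have hQ_intertwine : (fromRows M U).submatrix e id * (B * (S * M)) =
      (fromBlocks (M * B * S) 0 (U * B * S) 0).submatrix e e * (fromRows M U).submatrix e id := by
    rw [submatrix_mul_equiv, ← hintertwine]
    rfl
  rw [hQ_intertwine, mul_nonsing_inv_cancel_right _ _ ((isUnit_iff_isUnit_det _).mp hQ)]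

end BlockRows

section IncidenceMatrix

variable {K V ε : Type*} [CommRing K] [DecidableEq V] {tail head : ε → V}

/-- The incidence matrix of the digraph with edges `tail e → head e`: the column of `e` is
`e_(tail e) - e_(head e)`. In particular a loop has a zero column. -/
def digraphIncMatrix (K : Type*) [CommRing K] (tail head : ε → V) : Matrix V ε K :=
  of fun v e => (Pi.single (tail e) 1 - Pi.single (head e) 1 : V → K) v

lemma eq_digraphIncMatrix (hth : ∀ e, tail e ≠ head e) {E : Matrix V ε K}
    (hE : ∀ v e, E v e = if v = tail e then 1 else if v = head e then -1 else 0) :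
    E = digraphIncMatrix K tail head := by
  ext v e
  rcases eq_or_ne v (tail e) with rfl | hv_tail
  · simp [hE, digraphIncMatrix, hth e]
  rcases eq_or_ne v (head e) with rfl | hv_head
  · simp [hE, digraphIncMatrix, hv_tail]
  · simp [hE, digraphIncMatrix, hv_tail, hv_head]

lemma digraphIncMatrix_submatrix_id {κ : Type*} (c : κ → ε) :
    (digraphIncMatrix K tail head).submatrix id c = digraphIncMatrix K (tail ∘ c) (head ∘ c) :=
  rfl

lemma replicateRow_one_mul_digraphIncMatrix [Fintype V] (o : Type*) :
    replicateRow o (1 : V → K) * digraphIncMatrix K tail head = 0 := by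
  ext i e
  simp [digraphIncMatrix, mul_apply]

lemma single_sub_single_mem_span_col {u v : V}
    (huv : Relation.EqvGen (fun a b => ∃ e, tail e = a ∧ head e = b) u v) :
    (Pi.single u 1 - Pi.single v 1 : V → K) ∈
      Submodule.span K (Set.range (digraphIncMatrix K tail head).col) := by
  induction huv with
  | rel u v h =>
    obtain ⟨e, rfl, rfl⟩ := h
    exact Submodule.subset_span ⟨e, rfl⟩
  | refl u => simp only [sub_self, Submodule.zero_mem]
  | symm u v _ ih => simpa only [neg_sub] using Submodule.neg_mem _ ih
  | trans u v w _ _ huv hvw => simpa only [sub_add_sub_cancel] using Submodule.add_mem _ huv hvw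

lemma eq_top_of_single_sub_single_mem [Fintype V] (hV : IsUnit (Fintype.card V : K))
    {P : Submodule K (V → K)} (hone : 1 ∈ P) {r : V}
    (hr : ∀ v, Pi.single v 1 - Pi.single r 1 ∈ P) : P = ⊤ := by
  have hcard_smul : (Fintype.card V : K) • (Pi.single r 1 : V → K) =
      1 - ∑ v, (Pi.single v 1 - Pi.single r 1) := by
    have hone_eq : ∑ v, (Pi.single v 1 : V → K) = 1 := Finset.univ_sum_single 1
    rw [Finset.sum_sub_distrib, hone_eq, sub_sub_cancel, Finset.sum_const, Finset.card_univ,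
      Nat.cast_smul_eq_nsmul]
  have hroot : Pi.single r 1 ∈ P := by
    rw [← P.smul_mem_iff_of_isUnit hV, hcard_smul]
    exact P.sub_mem hone (P.sum_mem fun v _ => hr v)
  rw [eq_top_iff, ← (Pi.basisFun K V).span_eq, Submodule.span_le, Set.range_subset_iff]
  intro v
  rw [Pi.basisFun_apply, ← sub_add_cancel (Pi.single v 1) (Pi.single r 1)]
  exact P.add_mem (hr v) hroot

lemma isUnit_fromRows_digraphIncMatrix [Fintype V] {o : Type*} [Nonempty o]
    (hV : IsUnit (Fintype.card V : K)) {r : V}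
    (hconn : ∀ v, Relation.EqvGen (fun a b => ∃ e, tail e = a ∧ head e = b) v r)
    (f : V ≃ ε ⊕ o) :
    IsUnit ((fromRows (digraphIncMatrix K tail head)ᵀ (replicateRow o 1)).submatrix f id) := by
  set Q := (fromRows (digraphIncMatrix K tail head)ᵀ (replicateRow o 1)).submatrix f id with hQ
  have hcol : Set.range (digraphIncMatrix K tail head).col ⊆ Set.range Q.row := by
    rintro _ ⟨e, rfl⟩
    exact ⟨f.symm (.inl e), by ext; simp [hQ]⟩
  have hone : 1 ∈ Set.range Q.row := ⟨f.symm (.inr (Classical.arbitrary o)), by ext; simp [hQ]⟩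
  rw [← vecMul_surjective_iff_isUnit, ← coe_vecMulLinear, ← LinearMap.range_eq_top,
    range_vecMulLinear]
  exact eq_top_of_single_sub_single_mem hV (Submodule.subset_span hone) fun v =>
    Submodule.span_mono hcol (single_sub_single_mem_span_col (hconn v))

end IncidenceMatrix

/-- The splitting of `Fin n` into its first `k` and its last `n - k` elements. -/
def finSplit {k n : ℕ} (hk : k ≤ n) : Fin n ≃ Fin k ⊕ Fin (n - k) :=
  (finCongr (Nat.add_sub_cancel' hk).symm).trans finSumFinEquiv.symm

lemma finSplit_apply {k n : ℕ} (hk : k ≤ n) (i : Fin n) :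
    finSplit hk i = if hi : i.val < k then .inl ⟨i, hi⟩ else .inr ⟨i - k, by omega⟩ := by
  split_ifs with hi <;> rw [finSplit, Equiv.trans_apply, Equiv.symm_apply_eq] <;> ext <;> simp
  omega

theorem graphLaplacian_similar_block_triangular_general
    {K : Type*} [CommRing K] {n m : ℕ} (hn : IsUnit (n : K)) (hmn : n - 1 ≤ m)
    (tail head : Fin m → Fin n)
    (E : Matrix (Fin n) (Fin m) K) (hE : E = digraphIncMatrix K tail head)
    (B : Matrix (Fin n) (Fin m) K)
    (Lg : Matrix (Fin n) (Fin n) K) (hLg : Lg = B * Eᵀ)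
    (root : Fin n)
    (hconn : ∀ v : Fin n, Relation.EqvGen
      (fun a b => ∃ e : Fin m, e.val < n - 1 ∧ tail e = a ∧ head e = b) v root)
    (Eτ : Matrix (Fin n) (Fin (n - 1)) K)
    (hEτ : Eτ = E.submatrix id (fun i : Fin (n - 1) => ⟨i.val, lt_of_lt_of_le i.2 hmn⟩))
    (Ec : Matrix (Fin n) (Fin (m - (n - 1))) K)
    (hEc : Ec = E.submatrix id
      (fun j : Fin (m - (n - 1)) => ⟨n - 1 + j.val, by have := j.2; omega⟩))
    (Tτ : Matrix (Fin (n - 1)) (Fin (m - (n - 1))) K)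
    (hTτ : Tτ = (Eτᵀ * Eτ)⁻¹ * Eτᵀ * Ec)
    (R : Matrix (Fin (n - 1)) (Fin m) K)
    (hR : ∀ (i : Fin (n - 1)) (j : Fin m), R i j =
      if h : j.val < n - 1 then (if i.val = j.val then 1 else 0)
      else Tτ i ⟨j.val - (n - 1), by have := j.2; omega⟩)
    (Q : Matrix (Fin n) (Fin n) K)
    (hQ : ∀ (i j : Fin n), Q i j = if h : i.val < n - 1 then Eτᵀ ⟨i.val, h⟩ j else 1) :
    IsUnit Q ∧
    ∀ (i j : Fin n), (Q * Lg * Q⁻¹) i j =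
      if hi : i.val < n - 1 then
        (if hj : j.val < n - 1 then (Eτᵀ * B * Rᵀ) ⟨i.val, hi⟩ ⟨j.val, hj⟩ else 0)
      else
        (if hj : j.val < n - 1 then
          Matrix.vecMul (fun _ => (1 : K)) (B * Rᵀ) ⟨j.val, hj⟩ else 0) := by
  let ones : Matrix (Fin (n - (n - 1))) (Fin n) K := replicateRow _ 1
  let rows := finSplit (n.sub_le 1)
  have : Nonempty (Fin (n - (n - 1))) := ⟨0, by have := root.2; omega⟩
  have hQ_rows : Q = (fromRows Eτᵀ ones).submatrix rows id := by
    ext i j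
    by_cases hi : i.val < n - 1 <;> simp [hQ, rows, ones, finSplit_apply, hi]
  have hR_cols : R = (fromCols 1 Tτ).submatrix id (finSplit hmn) := by
    ext i j
    by_cases hj : j.val < n - 1 <;> simp [hR, finSplit_apply, hj, one_apply, Fin.ext_iff]
  have hE_cols : E = (fromCols Eτ Ec).submatrix id (finSplit hmn) := by
    ext v j
    by_cases hj : j.val < n - 1
    · simp [hEτ, finSplit_apply, hj]
    · simp [hEc, finSplit_apply, hj, Nat.add_sub_cancel' (not_lt.mp hj)]
  have hones_tree : ones * Eτ = 0 := by
    rw [hEτ, hE, digraphIncMatrix_submatrix_id, replicateRow_one_mul_digraphIncMatrix]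
  have hones_cotree : ones * Ec = 0 := by
    rw [hEc, hE, digraphIncMatrix_submatrix_id, replicateRow_one_mul_digraphIncMatrix]
  have hQ_unit : IsUnit ((fromRows Eτᵀ ones).submatrix rows id) := by
    rw [hEτ, hE, digraphIncMatrix_submatrix_id]
    refine isUnit_fromRows_digraphIncMatrix (by rwa [Fintype.card_fin]) (r := root) ?_ rows
    exact fun v => Relation.EqvGen.mono (fun _ _ ⟨e, he, hab⟩ => ⟨⟨e, he⟩, hab⟩) _ _ (hconn v)
  have hER : Eτ * R = E := by
    rw [hR_cols, hE_cols, ← mul_fromCols_one_gram_inv hones_tree hQ_unit hones_cotree, ← hTτ]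
    rfl
  have hones_row (a j) : (ones * B * Rᵀ) a j = vecMul (fun _ => 1) (B * Rᵀ) j := by
    rw [Matrix.mul_assoc]
    rfl
  refine ⟨hQ_rows ▸ hQ_unit, fun i j => ?_⟩
  rw [hLg, ← hER, transpose_mul, hQ_rows, fromRows_conj_eq_fromBlocks hQ_unit]
  by_cases hi : i.val < n - 1 <;> by_cases hj : j.val < n - 1 <;>
    simp [rows, finSplit_apply, hi, hj, hones_row]

/-- For a weighted digraph with positive weights whose first `n-1` edges
form a rooted in-branching with root the vertex `n-1`, the graph Laplacian
`Lg = A * W * Eᵀ` is similar, via the matrix `Q` with rows `Eτᵀ` and `1ₙᵀ`, to the block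
lower-triangular matrix with blocks `Eτᵀ * A * W * Rᵀ`, `0`, `1ₙᵀ * A * W * Rᵀ`, `0`. -/
theorem graphLaplacian_similar_block_triangular
    (n m : ℕ) (hn : 2 ≤ n) (hm : 1 ≤ m) (hmn : n - 1 ≤ m)
    (tail head : Fin m → Fin n) (hth : ∀ e, tail e ≠ head e)
    (w : Fin m → ℝ) (hw : ∀ e, 0 < w e)
    (E : Matrix (Fin n) (Fin m) ℝ)
    (hE : ∀ v e, E v e = if v = tail e then 1 else if v = head e then -1 else 0)
    (A : Matrix (Fin n) (Fin m) ℝ)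
    (hA : ∀ v e, A v e = if v = tail e then 1 else 0)
    (W : Matrix (Fin m) (Fin m) ℝ) (hW : W = Matrix.diagonal w)
    (Lg : Matrix (Fin n) (Fin n) ℝ) (hLg : Lg = A * W * Eᵀ)
    (root : Fin n) (hroot : root = ⟨n - 1, by omega⟩)
    -- the first n-1 edges form a rooted in-branching with root `root`:
    (hinj : Function.Injective (fun i : Fin (n - 1) => tail ⟨i.val, lt_of_lt_of_le i.2 hmn⟩))
    (hnotroot : ∀ i : Fin (n - 1), tail ⟨i.val, lt_of_lt_of_le i.2 hmn⟩ ≠ root)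
    (hsurj : ∀ v : Fin n, v ≠ root → ∃ i : Fin (n - 1), tail ⟨i.val, lt_of_lt_of_le i.2 hmn⟩ = v)
    (hreach : ∀ v : Fin n, Relation.ReflTransGen
      (fun a b => ∃ e : Fin m, e.val < n - 1 ∧ tail e = a ∧ head e = b) v root)
    (Eτ : Matrix (Fin n) (Fin (n - 1)) ℝ)
    (hEτ : Eτ = E.submatrix id (fun i : Fin (n - 1) => ⟨i.val, lt_of_lt_of_le i.2 hmn⟩))
    (Ec : Matrix (Fin n) (Fin (m - (n - 1))) ℝ)
    (hEc : Ec = E.submatrix id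
      (fun j : Fin (m - (n - 1)) => ⟨n - 1 + j.val, by have := j.2; omega⟩))
    (Tτ : Matrix (Fin (n - 1)) (Fin (m - (n - 1))) ℝ)
    (hTτ : Tτ = (Eτᵀ * Eτ)⁻¹ * Eτᵀ * Ec)
    (R : Matrix (Fin (n - 1)) (Fin m) ℝ)
    (hR : ∀ (i : Fin (n - 1)) (j : Fin m), R i j =
      if h : j.val < n - 1 then (if i.val = j.val then 1 else 0)
      else Tτ i ⟨j.val - (n - 1), by have := j.2; omega⟩)
    (Q : Matrix (Fin n) (Fin n) ℝ)
    (hQ : ∀ (i j : Fin n), Q i j = if h : i.val < n - 1 then Eτᵀ ⟨i.val, h⟩ j else 1) :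
    IsUnit Q ∧
    ∀ (i j : Fin n), (Q * Lg * Q⁻¹) i j =
      if hi : i.val < n - 1 then
        (if hj : j.val < n - 1 then (Eτᵀ * A * W * Rᵀ) ⟨i.val, hi⟩ ⟨j.val, hj⟩ else 0)
      else
        (if hj : j.val < n - 1 then
          Matrix.vecMul (fun _ => (1 : ℝ)) (A * W * Rᵀ) ⟨j.val, hj⟩ else 0) := by
  simpa only [Matrix.mul_assoc] using graphLaplacian_similar_block_triangular_general
    (Nat.cast_ne_zero.mpr (by omega)).isUnit hmn tail head E (eq_digraphIncMatrix hth hE)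
    (A * W) Lg hLg root (fun v => Relation.EqvGen.reflTransGen_le_eqvGen _ _ _ (hreach v))
    Eτ hEτ Ec hEc Tτ hTτ R hR Q hQ
end

section
/- Suppose the digraph is acyclic, all edge weights are positive, the digraph has a globally reachable vertex, and the first n−1 edges form a rooted in-branching with root the vertex indexed n−1. Let k be any edge index and let δ ∈ ℝ satisfy |δ| · |(Rᵀ * (R̃ * W * Rᵀ)⁻¹ * R̃) k k| < 1, i.e., |δ| is strictly less than the absolute value of the reciprocal of the (k,k) entry of Rᵀ * (R̃ * W * Rᵀ)⁻¹ * R̃. Let W_δ be the m×m diagonal matrix equal to W except that its (k,k) entry is w k + δ. Then every eigenvalue λ ∈ ℂ of the perturbed reduced edge Laplacian Eτᵀ * A * W_δ * Rᵀ (viewed as a complex matrix) has strictly positive real part. -/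
open Matrix

/-!
Write `E = Eτ R` and `A = Aτ R'`. Then `Eτᵀ A D Rᵀ = (Eτᵀ Aτ)(R' D Rᵀ)` has the same
characteristic polynomial as `(R' D Rᵀ)(Eτᵀ Aτ) = Aτᵀ (A D Eᵀ) Aτ`, the out-degree Laplacian with
the row and column of the root deleted. Along a topological sort this matrix is triangular, with
the weighted out-degrees on its diagonal; hence these are the eigenvalues, for any weights `D`.
The same triangularity shows that the `(k, k)` entry of `Rᵀ (R' W Rᵀ)⁻¹ R'` is the reciprocal of
the out-degree of `tail k`, which is the only out-degree affected by perturbing the weight of `k`.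
So the bound on `δ` says exactly that `|δ|` is smaller than that out-degree.
-/

open Polynomial Relation

section Triangular

variable {m α R K : Type*} [Fintype m] [LinearOrder α] {b : m → α}

theorem dotProduct_eq_mul_of_forall_lt [NonUnitalNonAssocSemiring R] (hb : b.Injective)
    {x y : m → R} {i : m} (hx : ∀ j, b j < b i → x j = 0) (hy : ∀ j, b i < b j → y j = 0) :
    x ⬝ᵥ y = x i * y i := by
  refine Fintype.sum_eq_single i fun j hj => ?_
  rcases lt_or_gt_of_ne (hb.ne hj) with h | h
  · rw [hx j h, zero_mul]
  · rw [hy j h, mul_zero]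

variable [DecidableEq m]

theorem det_eq_prod_of_blockTriangular [CommRing R] {M : Matrix m m R} (hb : b.Injective)
    (hM : M.BlockTriangular b) : M.det = ∏ i, M i i :=
  letI := LinearOrder.lift' b hb
  det_of_isUpperTriangular fun _ _ h => hM h

theorem isUnit_det_of_blockTriangular [Field K] {M : Matrix m m K} (hb : b.Injective)
    (hM : M.BlockTriangular b) (hdiag : ∀ i, M i i ≠ 0) : IsUnit M.det := by
  rw [det_eq_prod_of_blockTriangular hb hM, isUnit_iff_ne_zero]
  exact Finset.prod_ne_zero_iff.2 fun i _ => hdiag i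

theorem charpoly_eq_prod_of_blockTriangular [CommRing R] {M : Matrix m m R} (hb : b.Injective)
    (hM : M.BlockTriangular b) : M.charpoly = ∏ i, (X - C (M i i)) :=
  letI := LinearOrder.lift' b hb
  charpoly_of_isUpperTriangular M fun _ _ h => hM h

theorem blockTriangular_inv [CommRing R] {M : Matrix m m R} (hM : M.BlockTriangular b)
    (hdet : IsUnit M.det) : M⁻¹.BlockTriangular b :=
  letI := M.invertibleOfIsUnitDet hdet
  blockTriangular_inv_of_blockTriangular hM

theorem inv_apply_self_of_blockTriangular [Field K] {M : Matrix m m K} (hb : b.Injective)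
    (hM : M.BlockTriangular b) (hdet : IsUnit M.det) (i : m) : M⁻¹ i i = (M i i)⁻¹ := by
  have hprod : M i i * M⁻¹ i i = (M * M⁻¹) i i :=
    (dotProduct_eq_mul_of_forall_lt hb (fun _ h => hM h)
      fun _ h => blockTriangular_inv hM hdet h).symm
  rw [mul_nonsing_inv _ hdet, one_apply_eq] at hprod
  exact eq_inv_of_mul_eq_one_right hprod

theorem exists_eq_of_mem_spectrum_map [CommRing R] [Field K] {M : Matrix m m R} {d : m → R}
    (hM : M.charpoly = ∏ i, (X - C (d i))) (f : R →+* K) {μ : K}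
    (hμ : μ ∈ spectrum K (M.map f)) : ∃ i, μ = f (d i) := by
  rw [mem_spectrum_iff_isRoot_charpoly, charpoly_map, hM, IsRoot.def, eval_map, eval₂_finsetProd,
    Finset.prod_eq_zero_iff] at hμ
  obtain ⟨i, -, hi⟩ := hμ
  exact ⟨i, by simpa [sub_eq_zero] using hi⟩

end Triangular

theorem mem_spectrum_of_mulVec_eq_smul {m K : Type*} [Fintype m] [DecidableEq m] [Field K]
    {M : Matrix m m K} {μ : K} {x : m → K} (hx : x ≠ 0) (h : M *ᵥ x = μ • x) :
    μ ∈ spectrum K M := by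
  rw [← spectrum_toLin']
  exact (Module.End.hasEigenvalue_of_hasEigenvector
    (Module.End.hasEigenvector_iff.2 ⟨Module.End.mem_eigenspace_iff.2 h, hx⟩)).mem_spectrum

section Coordinates

variable {V ε τ κ K : Type*} [Fintype V] [Fintype τ] [DecidableEq τ]

theorem isUnit_det_transpose_mul_self_of_isUnit_det_mul [Field K] [LinearOrder K]
    [IsStrictOrderedRing K] {M : Matrix V τ K} {N : Matrix τ V K} (hNM : IsUnit (N * M).det) :
    IsUnit (Mᵀ * M).det := by
  rw [isUnit_iff_ne_zero, Ne, ← exists_mulVec_eq_zero_iff]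
  rintro ⟨x, hx, hMx⟩
  have hMx' : M *ᵥ x = 0 := by
    rw [← mulVec_mulVec] at hMx
    rw [← dotProduct_self_eq_zero, dotProduct_mulVec, ← mulVec_transpose, hMx, zero_dotProduct]
  refine hNM.ne_zero (exists_mulVec_eq_zero_iff.1 ⟨x, hx, ?_⟩)
  rw [← mulVec_mulVec, hMx', mulVec_zero]

theorem submatrix_mul_eq_of_normal_equations [CommRing K] {F : Matrix V ε K} {R : Matrix τ ε K}
    {t : τ → ε} {c : κ → ε} (htc : ∀ e, (∃ i, t i = e) ∨ ∃ j, c j = e)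
    (hgram : IsUnit ((F.submatrix id t)ᵀ * F.submatrix id t).det)
    (hspan : ∃ Y : Matrix τ ε K, F.submatrix id t * Y = F)
    (hRt : R.submatrix id t = 1)
    (hRc : R.submatrix id c = ((F.submatrix id t)ᵀ * F.submatrix id t)⁻¹ * (F.submatrix id t)ᵀ *
      F.submatrix id c) :
    F.submatrix id t * R = F := by
  set M := F.submatrix id t
  obtain ⟨Y, hY⟩ := hspan
  have hMRt : M * R.submatrix id t = M := by rw [hRt, Matrix.mul_one]
  have hFc : F.submatrix id c = M * Y.submatrix id c := by nth_rw 1 [← hY]; rfl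
  have hMRc : M * R.submatrix id c = F.submatrix id c := by
    rw [hRc, hFc, ← Matrix.mul_assoc _ M, Matrix.mul_assoc _ Mᵀ M, nonsing_inv_mul _ hgram,
      Matrix.one_mul]
  ext v e
  obtain ⟨i, rfl⟩ | ⟨j, rfl⟩ := htc e
  · exact congrFun₂ hMRt v i
  · exact congrFun₂ hMRc v j

theorem submatrix_mul_eq_of_identity_append [CommRing K] {p m : ℕ} (hpm : p ≤ m)
    {F : Matrix V (Fin m) K} {M : Matrix V (Fin p) K} {N : Matrix V (Fin (m - p)) K}
    {R : Matrix (Fin p) (Fin m) K}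
    (hM : M = F.submatrix id fun i => ⟨i.val, i.2.trans_le hpm⟩)
    (hN : N = F.submatrix id fun j => ⟨p + j.val, by omega⟩)
    (hgram : IsUnit (Mᵀ * M).det) (hspan : ∃ Y : Matrix (Fin p) (Fin m) K, M * Y = F)
    (hR : ∀ (i : Fin p) (j : Fin m), R i j =
      if h : j.val < p then (if i.val = j.val then 1 else 0)
      else ((Mᵀ * M)⁻¹ * Mᵀ * N) i ⟨j.val - p, by omega⟩) :
    M * R = F := by
  subst hM hN
  refine submatrix_mul_eq_of_normal_equations
    (c := fun j : Fin (m - p) => (⟨p + j.val, by omega⟩ : Fin m)) (fun e => ?_) hgram hspan ?_ ?_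
  · rcases lt_or_ge e.val p with he | he
    · exact .inl ⟨⟨e, he⟩, rfl⟩
    · exact .inr ⟨⟨e - p, by omega⟩, Fin.ext (Nat.add_sub_cancel' he)⟩
  · ext i j
    simp [hR, one_apply, Fin.ext_iff]
  · ext i j
    simp [hR]

end Coordinates

section Acyclic

variable {V : Type*} {r : V → V → Prop}

theorem not_rel_of_forall_reflTransGen (hr : ∀ v, ¬ TransGen r v v) {root : V}
    (hroot : ∀ v, ReflTransGen r v root) (v : V) : ¬ r root v :=
  fun h => hr root (.head' h (hroot v))

theorem exists_injective_nat_of_acyclic [Finite V] (hr : ∀ v, ¬ TransGen r v v) :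
    ∃ b : V → ℕ, b.Injective ∧ ∀ u v, r u v → b u < b v := by
  let : PartialOrder V :=
    { le := ReflTransGen r
      le_refl := fun _ => .refl
      le_trans := fun _ _ _ => .trans
      le_antisymm := fun u v huv hvu => by
        rcases reflTransGen_iff_eq_or_transGen.1 huv with h | h
        · exact h.symm
        · exact (hr u (h.trans_left hvu)).elim }
  have : Fintype (LinearExtension V) := Fintype.ofFinite V
  let ranking := (Fintype.orderIsoFinOfCardEq (LinearExtension V) rfl).symm
  have hinj : Function.Injective fun v : V => (ranking v).val :=
    Fin.val_injective.comp ranking.injective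
  refine ⟨fun v => ranking v, hinj, fun u v huv => ?_⟩
  have hne : u ≠ v := by
    rintro rfl
    exact hr u (.single huv)
  have hle : u ≤ v := ReflTransGen.single huv
  exact lt_of_le_of_ne (ranking.monotone (toLinearExtension.monotone hle)) (hinj.ne hne)

end Acyclic

section Digraph

variable {V ε τ α K : Type*}

/-- `b` is a topological sort of the digraph with edges `tail e → head e`: an injective labelling
of the vertices that increases along every edge. -/
structure IsTopologicalSort [LT α] (tail head : ε → V) (b : V → α) : Prop where
  injective : b.Injective
  lt (e : ε) : b (tail e) < b (head e)

/-- `root` is a sink and the edges `t i` select exactly one out-edge at every other vertex. In a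
finite acyclic digraph this says that the `t i` form a rooted in-branching with root `root`. -/
structure IsOutEdgeSelection (tail : ε → V) (t : τ → ε) (root : V) : Prop where
  injective : (tail ∘ t).Injective
  exists_tail_eq {v : V} (hv : v ≠ root) : ∃ i, tail (t i) = v
  tail_ne_root (e : ε) : tail e ≠ root

/-- The total weight of the edges leaving `v`. -/
def weightedOutDegree [DecidableEq V] [Fintype ε] [AddCommMonoid K] (tail : ε → V) (d : ε → K)
    (v : V) : K :=
  ∑ e with tail e = v, d e

variable (K) in
/-- The incidence matrix of a digraph: column `e` has `1` at `tail e` and `-1` at `head e`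
(only `1` when `e` is a loop). -/
def incidence [DecidableEq V] [Zero K] [One K] [Neg K] (tail head : ε → V) : Matrix V ε K :=
  of fun v e => if v = tail e then 1 else if v = head e then -1 else 0

variable (K) in
/-- The out-incidence matrix of a digraph: column `e` is the indicator of `tail e`. -/
def outIncidence [DecidableEq V] [Zero K] [One K] (tail : ε → V) : Matrix V ε K :=
  (1 : Matrix V V K).submatrix id tail

/-- The out-degree Laplacian `A D Eᵀ` of a weighted digraph, for the out-incidence matrix `A`,
the incidence matrix `E` and the diagonal weight matrix `D`. -/
def outLaplacian [DecidableEq V] [Fintype ε] [DecidableEq ε] [Ring K] (tail head : ε → V)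
    (d : ε → K) : Matrix V V K :=
  outIncidence K tail * diagonal d * (incidence K tail head)ᵀ

section Vertices

variable {tail head : ε → V} {b : V → α} {t : τ → ε} {root : V}

theorem exists_isTopologicalSort [Finite V]
    (hacyclic : ∀ v, ¬ TransGen (fun u v => ∃ e, tail e = u ∧ head e = v) v v) :
    ∃ b : V → ℕ, IsTopologicalSort tail head b := by
  obtain ⟨b, hinj, hlt⟩ := exists_injective_nat_of_acyclic hacyclic
  exact ⟨b, hinj, fun e => hlt _ _ ⟨e, rfl, rfl⟩⟩

theorem IsTopologicalSort.comp [LT α] (hb : IsTopologicalSort tail head b) (t : τ → ε) :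
    IsTopologicalSort (tail ∘ t) (head ∘ t) b :=
  ⟨hb.injective, fun i => hb.lt (t i)⟩

theorem IsTopologicalSort.tail_ne_head [Preorder α] (hb : IsTopologicalSort tail head b) (e : ε) :
    tail e ≠ head e :=
  fun h => (hb.lt e).ne (congrArg b h)

theorem IsOutEdgeSelection.exists_factorization (ht : IsOutEdgeSelection tail t root) :
    ∃ σ : ε → τ, (tail ∘ t) ∘ σ = tail := by
  choose σ hσ using fun e => ht.exists_tail_eq (ht.tail_ne_root e)
  exact ⟨σ, funext hσ⟩

theorem IsOutEdgeSelection.eq_zero_of_submatrix_eq_zero [Fintype V] {ι : Type*} [NonAssocSemiring K]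
    (ht : IsOutEdgeSelection tail t root) {M : Matrix V ι K}
    (hrow : M.submatrix (tail ∘ t) id = 0) (hcol : 1 ᵥ* M = 0) : M = 0 := by
  have hne (v : V) (hv : v ≠ root) (j : ι) : M v j = 0 := by
    obtain ⟨i, rfl⟩ := ht.exists_tail_eq hv
    exact congrFun₂ hrow i j
  ext v j
  rcases eq_or_ne v root with rfl | hv
  · have hsum := congrFun hcol j
    rwa [vecMul, dotProduct, Fintype.sum_eq_single v fun u hu => by rw [hne u hu j, mul_zero],
      Pi.one_apply, one_mul] at hsum
  · exact hne v hv j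

end Vertices

variable [DecidableEq V] {tail head : ε → V} {b : V → α}

theorem weightedOutDegree_update [Fintype ε] [DecidableEq ε] [AddCommMonoid K]
    (d : ε → K) (k : ε) (δ : K) (v : V) :
    weightedOutDegree tail (Function.update d k (d k + δ)) v =
      weightedOutDegree tail d v + if tail k = v then δ else 0 := by
  have hupdate : Function.update d k (d k + δ) = d + Pi.single k δ := by
    ext e
    rcases eq_or_ne e k with rfl | he <;> simp [*]
  simp [weightedOutDegree, hupdate, Finset.sum_add_distrib, Finset.sum_filter]

theorem IsOutEdgeSelection.weightedOutDegree_pos [Fintype ε] [AddCommMonoid K] [PartialOrder K]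
    [IsOrderedCancelAddMonoid K] {t : τ → ε} {root : V} (ht : IsOutEdgeSelection tail t root)
    {d : ε → K} (hd : ∀ e, 0 < d e) {v : V} (hv : v ≠ root) : 0 < weightedOutDegree tail d v := by
  obtain ⟨i, hi⟩ := ht.exists_tail_eq hv
  exact Finset.sum_pos (fun e _ => hd e) ⟨t i, Finset.mem_filter.2 ⟨Finset.mem_univ _, hi⟩⟩

section Incidence

variable [Zero K] [One K] [Neg K]

theorem incidence_apply_tail (e : ε) : incidence K tail head (tail e) e = 1 :=
  if_pos rfl

theorem IsTopologicalSort.incidence_apply_eq_zero [Preorder α]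
    (hb : IsTopologicalSort tail head b) {v : V} {e : ε} (hv : b v < b (tail e)) :
    incidence K tail head v e = 0 := by
  have hne_tail : v ≠ tail e := fun h => hv.ne (congrArg b h)
  have hne_head : v ≠ head e := fun h => (hv.trans (hb.lt e)).ne (congrArg b h)
  rw [incidence, of_apply, if_neg hne_tail, if_neg hne_head]

end Incidence

theorem one_vecMul_incidence [Fintype V] [NonAssocRing K] (hne : ∀ e, tail e ≠ head e) :
    1 ᵥ* incidence K tail head = 0 := by
  ext e
  have hcol (v : V) : incidence K tail head v e =
      (if v = tail e then 1 else 0) - if v = head e then 1 else 0 := by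
    rcases eq_or_ne v (tail e) with rfl | hv
    · simp [incidence, hne]
    · simp only [incidence, of_apply, if_neg hv]
      split_ifs <;> simp
  simp [vecMul, dotProduct, hcol]

theorem outIncidence_apply [Zero K] [One K] (v : V) (e : ε) :
    outIncidence K tail v e = if v = tail e then 1 else 0 :=
  one_apply

section Products

variable [Fintype V] {ι : Type*} [NonAssocSemiring K]

theorem transpose_outIncidence_mul (M : Matrix V ι K) :
    (outIncidence K tail)ᵀ * M = M.submatrix tail id := by
  ext e j
  simp [mul_apply, outIncidence_apply]

theorem mul_outIncidence (M : Matrix ι V K) :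
    M * outIncidence K tail = M.submatrix id tail := by
  ext i e
  simp [mul_apply, outIncidence_apply]

theorem transpose_outIncidence_mul_self [DecidableEq ε] (htail : tail.Injective) :
    (outIncidence K tail)ᵀ * outIncidence K tail = 1 := by
  rw [transpose_outIncidence_mul]
  exact submatrix_one tail htail

end Products

theorem outIncidence_mul_outIncidence [Fintype τ] [DecidableEq τ] [NonAssocSemiring K]
    (f : τ → V) (σ : ε → τ) :
    outIncidence K f * outIncidence K σ = outIncidence K (f ∘ σ) := by
  rw [mul_outIncidence]
  rfl

theorem eq_outIncidence_of_mul_eq [Fintype τ] [DecidableEq τ] [NonAssocSemiring K]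
    {t : τ → ε} {σ : ε → τ} (htail : (tail ∘ t).Injective) (hσ : (tail ∘ t) ∘ σ = tail)
    {R' : Matrix τ ε K} (hR' : outIncidence K (tail ∘ t) * R' = outIncidence K tail) :
    R' = outIncidence K σ := by
  have hcancel (M : Matrix τ ε K) :
      (outIncidence K (tail ∘ t) * M).submatrix (tail ∘ t) id = M := by
    ext i e
    simp only [submatrix_apply, mul_apply, outIncidence_apply, htail.eq_iff, ite_mul, one_mul,
      zero_mul, Finset.sum_ite_eq, Finset.mem_univ, if_true, id]
  rw [← hcancel R', hR', ← hcancel (outIncidence K σ), outIncidence_mul_outIncidence, hσ]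

theorem IsOutEdgeSelection.exists_outIncidence_mul_eq [Fintype τ] [NonAssocSemiring K]
    {t : τ → ε} {root : V} (ht : IsOutEdgeSelection tail t root) :
    ∃ Y : Matrix τ ε K, outIncidence K (tail ∘ t) * Y = outIncidence K tail := by
  classical
  obtain ⟨σ, hσ⟩ := ht.exists_factorization
  exact ⟨outIncidence K σ, by rw [outIncidence_mul_outIncidence, hσ]⟩

section Laplacian

variable [Fintype ε] [DecidableEq ε] [Ring K] {d : ε → K}

theorem outLaplacian_apply (u v : V) :
    outLaplacian tail head d u v = ∑ e with tail e = u, d e * incidence K tail head v e := by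
  rw [outLaplacian, mul_apply, Finset.sum_filter]
  refine Finset.sum_congr rfl fun e _ => ?_
  simp only [mul_diagonal, outIncidence_apply, transpose_apply, ite_mul, one_mul, zero_mul,
    eq_comm (a := u)]

theorem outLaplacian_apply_self (v : V) :
    outLaplacian tail head d v v = weightedOutDegree tail d v := by
  rw [outLaplacian_apply, weightedOutDegree]
  refine Finset.sum_congr rfl fun e he => ?_
  rw [← (Finset.mem_filter.1 he).2, incidence_apply_tail, mul_one]

theorem IsTopologicalSort.blockTriangular_outLaplacian [Preorder α]
    (hb : IsTopologicalSort tail head b) : (outLaplacian tail head d).BlockTriangular b := by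
  intro u v hvu
  rw [outLaplacian_apply]
  refine Finset.sum_eq_zero fun e he => ?_
  rw [← (Finset.mem_filter.1 he).2] at hvu
  rw [hb.incidence_apply_eq_zero hvu, mul_zero]

end Laplacian

section Gram

variable [Fintype ε] [DecidableEq ε] [LinearOrder α]

theorem IsTopologicalSort.det_incidence_submatrix [CommRing K]
    (hb : IsTopologicalSort tail head b) (htail : tail.Injective) :
    ((incidence K tail head).submatrix tail id).det = 1 := by
  have htri : ((incidence K tail head).submatrix tail id)ᵀ.BlockTriangular (b ∘ tail) :=
    fun _ _ h => hb.incidence_apply_eq_zero h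
  rw [← det_transpose, det_eq_prod_of_blockTriangular (hb.injective.comp htail) htri]
  exact Finset.prod_eq_one fun e _ => incidence_apply_tail e

variable [Fintype V]

theorem IsTopologicalSort.isUnit_det_incidence_gram [Field K] [LinearOrder K]
    [IsStrictOrderedRing K] (hb : IsTopologicalSort tail head b) (htail : tail.Injective) :
    IsUnit ((incidence K tail head)ᵀ * incidence K tail head).det := by
  refine isUnit_det_transpose_mul_self_of_isUnit_det_mul (N := (outIncidence K tail)ᵀ) ?_
  rw [transpose_outIncidence_mul, hb.det_incidence_submatrix htail]
  exact isUnit_one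

end Gram

theorem IsTopologicalSort.exists_incidence_mul_eq [Finite V] [Fintype τ] [LinearOrder α]
    [CommRing K] (hb : IsTopologicalSort tail head b) {t : τ → ε} {root : V}
    (ht : IsOutEdgeSelection tail t root) :
    ∃ Y : Matrix τ ε K, incidence K (tail ∘ t) (head ∘ t) * Y = incidence K tail head := by
  classical
  have := Fintype.ofFinite V
  set E := incidence K tail head
  set Eτ := incidence K (tail ∘ t) (head ∘ t)
  set G := Eτ.submatrix (tail ∘ t) id
  have hG : IsUnit G.det := by
    rw [(hb.comp t).det_incidence_submatrix ht.injective]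
    exact isUnit_one
  have hEτ : 1 ᵥ* Eτ = 0 := one_vecMul_incidence (hb.comp t).tail_ne_head
  refine ⟨G⁻¹ * E.submatrix (tail ∘ t) id, sub_eq_zero.1 (ht.eq_zero_of_submatrix_eq_zero ?_ ?_)⟩
  · calc
      _ = G * (G⁻¹ * E.submatrix (tail ∘ t) id) - E.submatrix (tail ∘ t) id := rfl
      _ = 0 := by rw [mul_nonsing_inv_cancel_left _ _ hG, sub_self]
  · rw [vecMul_sub, ← vecMul_vecMul, hEτ, zero_vecMul, one_vecMul_incidence hb.tail_ne_head,
      sub_zero]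

section ReducedEdgeLaplacian

variable [Fintype ε] [DecidableEq ε] [Fintype τ] {t : τ → ε} {root : V}

theorem grounded_outLaplacian_eq [Fintype V] [CommRing K] (htail : (tail ∘ t).Injective) (d : ε → K)
    {R R' : Matrix τ ε K}
    (hR : incidence K (tail ∘ t) (head ∘ t) * R = incidence K tail head)
    (hR' : outIncidence K (tail ∘ t) * R' = outIncidence K tail) :
    R' * diagonal d * Rᵀ * ((incidence K (tail ∘ t) (head ∘ t))ᵀ * outIncidence K (tail ∘ t)) =
      (outLaplacian tail head d).submatrix (tail ∘ t) (tail ∘ t) := by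
  classical
  set Aτ := outIncidence K (tail ∘ t)
  set Eτ := incidence K (tail ∘ t) (head ∘ t)
  calc
    R' * diagonal d * Rᵀ * (Eτᵀ * Aτ)
      = Aτᵀ * Aτ * R' * diagonal d * (Eτ * R)ᵀ * Aτ := by
        rw [transpose_outIncidence_mul_self htail, Matrix.one_mul, transpose_mul]
        simp only [Matrix.mul_assoc]
    _ = Aτᵀ * outLaplacian tail head d * Aτ := by
        rw [hR, Matrix.mul_assoc Aτᵀ, hR', outLaplacian]
        simp only [Matrix.mul_assoc]
    _ = _ := by rw [transpose_outIncidence_mul, mul_outIncidence, submatrix_submatrix]; rfl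

variable [DecidableEq τ] [LinearOrder α]

theorem IsTopologicalSort.charpoly_reducedEdgeLaplacian [Fintype V] [CommRing K]
    (hb : IsTopologicalSort tail head b) (htail : (tail ∘ t).Injective) (d : ε → K)
    {R R' : Matrix τ ε K}
    (hR : incidence K (tail ∘ t) (head ∘ t) * R = incidence K tail head)
    (hR' : outIncidence K (tail ∘ t) * R' = outIncidence K tail) :
    ((incidence K (tail ∘ t) (head ∘ t))ᵀ * outIncidence K tail * diagonal d * Rᵀ).charpoly =
      ∏ i, (X - C (weightedOutDegree tail d (tail (t i)))) := by
  set Aτ := outIncidence K (tail ∘ t)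
  set Eτ := incidence K (tail ∘ t) (head ∘ t)
  calc
    (Eτᵀ * outIncidence K tail * diagonal d * Rᵀ).charpoly
      = (Eτᵀ * Aτ * (R' * diagonal d * Rᵀ)).charpoly := by
        rw [← hR']
        simp only [Matrix.mul_assoc]
    _ = ((outLaplacian tail head d).submatrix (tail ∘ t) (tail ∘ t)).charpoly := by
        rw [charpoly_mul_comm, grounded_outLaplacian_eq htail d hR hR']
    _ = _ := by
        rw [charpoly_eq_prod_of_blockTriangular (hb.injective.comp htail)
          hb.blockTriangular_outLaplacian.submatrix]
        simp only [submatrix_apply, outLaplacian_apply_self, Function.comp_apply]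

theorem IsTopologicalSort.edgeGain_apply_self [Finite V] [Field K]
    (hb : IsTopologicalSort tail head b) (ht : IsOutEdgeSelection tail t root) {d : ε → K}
    (hd : ∀ v ≠ root, weightedOutDegree tail d v ≠ 0) {R R' : Matrix τ ε K}
    (hR : incidence K (tail ∘ t) (head ∘ t) * R = incidence K tail head)
    (hR' : outIncidence K (tail ∘ t) * R' = outIncidence K tail) (k : ε) :
    (Rᵀ * (R' * diagonal d * Rᵀ)⁻¹ * R') k k = (weightedOutDegree tail d (tail k))⁻¹ := by
  have := Fintype.ofFinite V
  obtain ⟨σ, hσ⟩ := ht.exists_factorization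
  obtain rfl := eq_outIncidence_of_mul_eq ht.injective hσ hR'
  set E := incidence K tail head
  set Eτ := incidence K (tail ∘ t) (head ∘ t)
  set Aτ := outIncidence K (tail ∘ t)
  set N := outIncidence K σ * diagonal d * Rᵀ
  set P := (outLaplacian tail head d).submatrix (tail ∘ t) (tail ∘ t)
  have hP : N * (Eτᵀ * Aτ) = P := grounded_outLaplacian_eq ht.injective d hR hR'
  have htri : P.BlockTriangular (b ∘ tail ∘ t) := hb.blockTriangular_outLaplacian.submatrix
  have hinj : (b ∘ tail ∘ t).Injective := hb.injective.comp ht.injective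
  have hdiag (i : τ) : P i i = weightedOutDegree tail d (tail (t i)) := outLaplacian_apply_self _
  have hdet : IsUnit P.det :=
    isUnit_det_of_blockTriangular hinj htri fun i => hdiag i ▸ hd _ (ht.tail_ne_root _)
  have hN : N⁻¹ = Eτᵀ * Aτ * P⁻¹ :=
    inv_eq_right_inv (by rw [← Matrix.mul_assoc, hP, mul_nonsing_inv _ hdet])
  have hσk : tail (t (σ k)) = tail k := congrFun hσ k
  have hEk : E (tail k) k = 1 := incidence_apply_tail k
  calc
    (Rᵀ * N⁻¹ * outIncidence K σ) k k
      = ((Eτ * R)ᵀ * Aτ * (P⁻¹ * outIncidence K σ)) k k := by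
        rw [hN, transpose_mul]
        simp only [Matrix.mul_assoc]
    _ = (fun i => E (tail (t i)) k) ⬝ᵥ fun i => P⁻¹ i (σ k) := by
        rw [hR, mul_outIncidence, mul_outIncidence]
        rfl
    _ = E (tail (t (σ k))) k * P⁻¹ (σ k) (σ k) :=
        dotProduct_eq_mul_of_forall_lt hinj
          (fun i hi => hb.incidence_apply_eq_zero (hσk ▸ hi))
          (fun i hi => blockTriangular_inv htri hdet hi)
    _ = (weightedOutDegree tail d (tail k))⁻¹ := by
        rw [inv_apply_self_of_blockTriangular hinj htri hdet, hdiag, hσk, hEk, one_mul]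

end ReducedEdgeLaplacian

end Digraph

theorem perturbed_reduced_edgeLaplacian_robust_gain_margin_general
    {V ε τ : Type*} [Fintype V] [DecidableEq V] [Fintype ε] [DecidableEq ε] [Fintype τ]
    [DecidableEq τ] {tail head : ε → V} {t : τ → ε} {root : V} {w : ε → ℝ}
    (hacyclic : ∀ v, ¬ TransGen (fun a b => ∃ e, tail e = a ∧ head e = b) v v)
    (ht : IsOutEdgeSelection tail t root)
    (hw : ∀ v ≠ root, 0 < weightedOutDegree tail w v) {R R' : Matrix τ ε ℝ}
    (hR : incidence ℝ (tail ∘ t) (head ∘ t) * R = incidence ℝ tail head)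
    (hR' : outIncidence ℝ (tail ∘ t) * R' = outIncidence ℝ tail) {k : ε} {δ : ℝ}
    (hδ : |δ| * |(Rᵀ * (R' * diagonal w * Rᵀ)⁻¹ * R') k k| < 1) {μ : ℂ}
    (hμ : μ ∈ spectrum ℂ (((incidence ℝ (tail ∘ t) (head ∘ t))ᵀ * outIncidence ℝ tail *
      diagonal (Function.update w k (w k + δ)) * Rᵀ).map Complex.ofRealHom)) :
    0 < μ.re := by
  obtain ⟨b, hb⟩ := exists_isTopologicalSort hacyclic
  obtain ⟨i, rfl⟩ := exists_eq_of_mem_spectrum_map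
    (hb.charpoly_reducedEdgeLaplacian ht.injective _ hR hR') Complex.ofRealHom hμ
  have hk : 0 < weightedOutDegree tail w (tail k) := hw _ (ht.tail_ne_root k)
  have hδ' : |δ| < weightedOutDegree tail w (tail k) := by
    rwa [hb.edgeGain_apply_self ht (fun v hv => (hw v hv).ne') hR hR', abs_inv, abs_of_pos hk,
      ← div_eq_mul_inv, div_lt_one hk] at hδ
  rw [Complex.ofRealHom_eq_coe, Complex.ofReal_re, weightedOutDegree_update]
  split_ifs with h
  · rw [← h]
    linarith [neg_abs_le δ]
  · rw [add_zero]
    exact hw _ (ht.tail_ne_root _)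

/-- For an acyclic weighted digraph with positive weights, a globally
reachable vertex, and whose first `n-1` edges form a rooted in-branching with root the
vertex `n-1`, if the weight of edge `k` is perturbed by `δ` with
`|δ| · |(Rᵀ (R̃ W Rᵀ)⁻¹ R̃) k k| < 1`, then all complex eigenvalues of the perturbed
reduced edge Laplacian `Eτᵀ * A * W_δ * Rᵀ` have strictly positive real part. -/
theorem perturbed_reduced_edgeLaplacian_robust_gain_margin
    (n m : ℕ) (hn : 2 ≤ n) (hm : 1 ≤ m) (hmn : n - 1 ≤ m)
    (tail head : Fin m → Fin n) (hth : ∀ e, tail e ≠ head e)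
    (w : Fin m → ℝ) (hw : ∀ e, 0 < w e)
    (E : Matrix (Fin n) (Fin m) ℝ)
    (hE : ∀ v e, E v e = if v = tail e then 1 else if v = head e then -1 else 0)
    (A : Matrix (Fin n) (Fin m) ℝ)
    (hA : ∀ v e, A v e = if v = tail e then 1 else 0)
    (W : Matrix (Fin m) (Fin m) ℝ) (hW : W = Matrix.diagonal w)
    (hacyclic : ∀ v : Fin n,
      ¬ Relation.TransGen (fun a b => ∃ e, tail e = a ∧ head e = b) v v)
    (hgr : ∃ v : Fin n, ∀ u : Fin n,
      Relation.ReflTransGen (fun a b => ∃ e, tail e = a ∧ head e = b) u v)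
    (root : Fin n) (hroot : root = ⟨n - 1, by omega⟩)
    -- the first n-1 edges form a rooted in-branching with root `root`:
    (hinj : Function.Injective (fun i : Fin (n - 1) => tail ⟨i.val, lt_of_lt_of_le i.2 hmn⟩))
    (hnotroot : ∀ i : Fin (n - 1), tail ⟨i.val, lt_of_lt_of_le i.2 hmn⟩ ≠ root)
    (hsurj : ∀ v : Fin n, v ≠ root → ∃ i : Fin (n - 1), tail ⟨i.val, lt_of_lt_of_le i.2 hmn⟩ = v)
    (hreach : ∀ v : Fin n, Relation.ReflTransGen
      (fun a b => ∃ e : Fin m, e.val < n - 1 ∧ tail e = a ∧ head e = b) v root)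
    (Eτ : Matrix (Fin n) (Fin (n - 1)) ℝ)
    (hEτ : Eτ = E.submatrix id (fun i : Fin (n - 1) => ⟨i.val, lt_of_lt_of_le i.2 hmn⟩))
    (Ec : Matrix (Fin n) (Fin (m - (n - 1))) ℝ)
    (hEc : Ec = E.submatrix id
      (fun j : Fin (m - (n - 1)) => ⟨n - 1 + j.val, by have := j.2; omega⟩))
    (Aτ : Matrix (Fin n) (Fin (n - 1)) ℝ)
    (hAτ : Aτ = A.submatrix id (fun i : Fin (n - 1) => ⟨i.val, lt_of_lt_of_le i.2 hmn⟩))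
    (Ac : Matrix (Fin n) (Fin (m - (n - 1))) ℝ)
    (hAc : Ac = A.submatrix id
      (fun j : Fin (m - (n - 1)) => ⟨n - 1 + j.val, by have := j.2; omega⟩))
    (Tτ : Matrix (Fin (n - 1)) (Fin (m - (n - 1))) ℝ)
    (hTτ : Tτ = (Eτᵀ * Eτ)⁻¹ * Eτᵀ * Ec)
    (R : Matrix (Fin (n - 1)) (Fin m) ℝ)
    (hR : ∀ (i : Fin (n - 1)) (j : Fin m), R i j =
      if h : j.val < n - 1 then (if i.val = j.val then 1 else 0)
      else Tτ i ⟨j.val - (n - 1), by have := j.2; omega⟩)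
    (T'τ : Matrix (Fin (n - 1)) (Fin (m - (n - 1))) ℝ)
    (hT'τ : T'τ = (Aτᵀ * Aτ)⁻¹ * Aτᵀ * Ac)
    (R' : Matrix (Fin (n - 1)) (Fin m) ℝ)
    (hR' : ∀ (i : Fin (n - 1)) (j : Fin m), R' i j =
      if h : j.val < n - 1 then (if i.val = j.val then 1 else 0)
      else T'τ i ⟨j.val - (n - 1), by have := j.2; omega⟩)
    (k : Fin m) (δ : ℝ)
    (hδ : |δ| * |(Rᵀ * (R' * W * Rᵀ)⁻¹ * R') k k| < 1)
    (Wδ : Matrix (Fin m) (Fin m) ℝ)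
    (hWδ : Wδ = Matrix.diagonal (fun e => if e = k then w k + δ else w e)) :
    ∀ μ : ℂ, (∃ x : Fin (n - 1) → ℂ, x ≠ 0 ∧
        ((Eτᵀ * A * Wδ * Rᵀ).map Complex.ofReal).mulVec x = μ • x) →
      0 < μ.re := by
  rintro μ ⟨x, hx, hMx⟩
  obtain rfl : E = incidence ℝ tail head := Matrix.ext hE
  obtain rfl : A = outIncidence ℝ tail :=
    Matrix.ext fun v e => (hA v e).trans (outIncidence_apply v e).symm
  have hWδ' : Wδ = diagonal (Function.update w k (w k + δ)) := by
    rw [hWδ, funext (Function.update_apply w k (w k + δ))]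
  obtain ⟨b, hb⟩ := exists_isTopologicalSort hacyclic
  have hroot_sink := not_rel_of_forall_reflTransGen hacyclic fun v =>
    ReflTransGen.mono (fun _ _ ⟨e, _, he⟩ => ⟨e, he⟩) v root (hreach v)
  let t (i : Fin (n - 1)) : Fin m := ⟨i.val, lt_of_lt_of_le i.2 hmn⟩
  have ht : IsOutEdgeSelection tail t root :=
    ⟨hinj, hsurj _, fun e he => hroot_sink _ ⟨e, he, rfl⟩⟩
  obtain rfl : Eτ = incidence ℝ (tail ∘ t) (head ∘ t) := hEτ
  obtain rfl : Aτ = outIncidence ℝ (tail ∘ t) := hAτ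
  subst hTτ hT'τ hW hWδ'
  exact perturbed_reduced_edgeLaplacian_robust_gain_margin_general hacyclic ht
    (fun v hv => ht.weightedOutDegree_pos hw hv)
    (submatrix_mul_eq_of_identity_append hmn rfl hEc
      ((hb.comp t).isUnit_det_incidence_gram ht.injective) (hb.exists_incidence_mul_eq ht) hR)
    (submatrix_mul_eq_of_identity_append hmn rfl hAc
      (by simp only [transpose_outIncidence_mul_self ht.injective, det_one, isUnit_one])
      ht.exists_outIncidence_mul_eq hR')
    hδ (mem_spectrum_of_mulVec_eq_smul hx hMx)
end
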